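/- arXiv:1905.10965 — 4 statements merged into one kernel-verified Lean document; each statement's English description precedes it below -/
import Mathlib

section
/- For reals a, b, c, d, e, f with a > 0, c > 0, 4ac − b² > 0, d > 0, f > 0, 4df − e² > 0, the integral A(a,b,c;d,e,f) = ∫_{−∞}^{∞} ln(dx² + ex + f)/(ax² + bx + c) dx equals (2π/√(4ac−b²))·(ln(2af − be + 2cd + √(4ac−b²)·√(4df−e²)) − ln(2a)). -/
open MeasureTheory Real

/-! Write `d x² + e x + f = d |x - w|²` and `a x² + b x + c = a |x - z|²` with `w` in the closed
and `z` in the open upper half-plane. Up to the factor `π / Im z`, the kernel `1 / |x - z|²` is the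
Poisson kernel of the lower half-plane at `conj z`, where `log |· - w|` is harmonic, so the integral
is read off from the value of `log |· - w|` at `conj z`. An affine substitution moves `z` to `i`;
the Cayley transform `x ↦ ζ` of the real line onto the unit circle then turns the Poisson integral
into a circle average and `log |x - w|` into `log |w + i| + log |ζ - β| - log |ζ + 1|`, where `β`,
the image of `w`, lies in the closed unit disc. Both logarithms in `ζ` have mean zero. -/

section CayleyTransform

open Complex (I)

/-- The Cayley transform. It maps the upper half-plane to the unit disc and the real line to the
unit circle without `-1`, and is normalised so that `cayley (tan (θ / 2)) = exp (θ * I)`. -/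
noncomputable def cayley (z : ℂ) : ℂ := (I - z) / (I + z)

lemma I_add_ne_zero_of_im_nonneg {z : ℂ} (hz : 0 ≤ z.im) : I + z ≠ 0 := by
  intro h
  have him : 1 + z.im = 0 := by simpa using congrArg Complex.im h
  linarith

lemma norm_cayley_le_one {z : ℂ} (hz : 0 ≤ z.im) : ‖cayley z‖ ≤ 1 := by
  rw [cayley, norm_div, div_le_one (norm_pos_iff.2 (I_add_ne_zero_of_im_nonneg hz)),
    ← sq_le_sq₀ (norm_nonneg _) (norm_nonneg _), Complex.sq_norm, Complex.sq_norm,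
    Complex.normSq_apply, Complex.normSq_apply]
  simp only [Complex.sub_re, Complex.sub_im, Complex.add_re, Complex.add_im, Complex.I_re,
    Complex.I_im]
  nlinarith

lemma cayley_add_one {z : ℂ} (hz : I + z ≠ 0) : cayley z + 1 = 2 * I / (I + z) := by
  rw [cayley]
  field_simp
  ring

lemma cayley_sub_cayley_mul {z w : ℂ} (hz : I + z ≠ 0) (hw : I + w ≠ 0) :
    (cayley z - cayley w) * (I + w) = (cayley z + 1) * (w - z) := by
  rw [cayley_add_one hz, cayley, cayley]
  field_simp
  ring

lemma circleMap_two_mul_arctan (x : ℝ) : circleMap 0 1 (2 * arctan x) = cayley x := by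
  have hne : I + x ≠ 0 := I_add_ne_zero_of_im_nonneg (by simp)
  have hcos : (Real.cos (arctan x) : ℂ) ^ 2 * (1 + x ^ 2) = 1 := by
    have h : Real.cos (arctan x) ^ 2 * (1 + x ^ 2) = 1 := by
      rw [cos_sq_arctan]
      field_simp
    exact_mod_cast h
  have hsin : Real.sin (arctan x) = x * Real.cos (arctan x) := by
    rw [sin_arctan, cos_arctan, mul_one_div]
  have hexp : Complex.exp (arctan x * I) = Real.cos (arctan x) * (1 + x * I) := by
    rw [Complex.exp_mul_I, ← Complex.ofReal_cos, ← Complex.ofReal_sin, hsin]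
    push_cast
    ring
  calc circleMap 0 1 (2 * arctan x) = Complex.exp (arctan x * I) ^ 2 := by
        rw [← Complex.exp_nat_mul, circleMap_zero]
        push_cast
        ring_nf
    _ = cayley x := by
        rw [hexp, cayley, eq_div_iff hne]
        linear_combination (I - x) * hcos +
          (Real.cos (arctan x) : ℂ) ^ 2 * (x ^ 2 * I + x ^ 3 + 2 * x) * Complex.I_sq

theorem circleAverage_eq_integral_cayley {E : Type*} [NormedAddCommGroup E] [NormedSpace ℝ E]
    (g : ℂ → E) :
    circleAverage g 0 1 = π⁻¹ • ∫ x : ℝ, (1 + x ^ 2)⁻¹ • g (cayley x) := by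
  have hrange : (fun x ↦ 2 * arctan x) '' Set.univ = Set.Ioo (-π) π := by
    rw [Set.image_univ, ← Function.comp_def (2 * ·) arctan, Set.range_comp, range_arctan,
      Set.image_mul_left_Ioo two_pos]
    congr 1 <;> ring
  have hderiv (x : ℝ) (_ : x ∈ Set.univ) :
      HasDerivWithinAt (fun x ↦ 2 * arctan x) (2 * (1 / (1 + x ^ 2))) Set.univ x :=
    ((hasDerivAt_arctan x).const_mul 2).hasDerivWithinAt
  have hinj : Set.InjOn (fun x ↦ 2 * arctan x) Set.univ :=
    ((mul_right_injective₀ two_ne_zero).comp arctan_injective).injOn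
  calc circleAverage g 0 1 = (2 * π)⁻¹ • ∫ θ in Set.Ioo (-π) π, g (circleMap 0 1 θ) := by
        rw [circleAverage_eq_integral_add (-π),
          intervalIntegral.integral_comp_add_right (fun θ ↦ g (circleMap 0 1 θ)),
          zero_add, show 2 * π + -π = π by ring,
          intervalIntegral.integral_of_le (by linarith [pi_pos]), integral_Ioc_eq_integral_Ioo]
    _ = (2 * π)⁻¹ • ∫ x : ℝ, (2 : ℝ) • (1 + x ^ 2)⁻¹ • g (cayley x) := by
        rw [← hrange, integral_image_eq_integral_abs_deriv_smul .univ hderiv hinj,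
          setIntegral_univ]
        congr with x
        rw [circleMap_two_mul_arctan, abs_of_pos (by positivity), one_div, mul_smul]
    _ = π⁻¹ • ∫ x : ℝ, (1 + x ^ 2)⁻¹ • g (cayley x) := by
        rw [integral_smul, smul_smul, mul_inv_rev, inv_mul_cancel_right₀ two_ne_zero]

end CayleyTransform

section PoissonIntegral

open Complex (I)
open scoped ComplexConjugate

lemma circleAverage_const_add_mul_log_norm_sub_sub (C s : ℝ) {β γ : ℂ} (hβ : ‖β‖ ≤ 1)
    (hγ : ‖γ‖ ≤ 1) :
    circleAverage (fun ζ ↦ C + s * (log ‖ζ - β‖ - log ‖ζ - γ‖)) 0 1 = C := by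
  have hint (δ : ℂ) : CircleIntegrable (fun ζ ↦ log ‖ζ - δ‖) 0 1 :=
    circleIntegrable_log_norm_sub_const 1
  have hmean {δ : ℂ} (hδ : ‖δ‖ ≤ 1) : circleAverage (fun ζ ↦ log ‖ζ - δ‖) 0 1 = 0 := by
    rw [circleAverage_log_norm_sub_const_eq_posLog, posLog_eq_zero_iff, abs_norm]
    exact hδ
  have hdiff : CircleIntegrable (fun ζ ↦ log ‖ζ - β‖ - log ‖ζ - γ‖) 0 1 :=
    (hint β).sub (hint γ)
  simp_rw [← smul_eq_mul s]
  rw [circleAverage_fun_add (circleIntegrable_const _ _ _) hdiff.const_fun_smul,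
    circleAverage_fun_smul, circleAverage_fun_sub (hint β) (hint γ), hmean hβ, hmean hγ,
    circleAverage_const, sub_zero, smul_zero, add_zero]

lemma log_norm_sub_eq_cayley {z w : ℂ} (hz : I + z ≠ 0) (hw : I + w ≠ 0) (hzw : z ≠ w) :
    log ‖z - w‖ = log ‖w + I‖ + (log ‖cayley z - cayley w‖ - log ‖cayley z - -1‖) := by
  have hprod := cayley_sub_cayley_mul hz hw
  have hone : cayley z + 1 ≠ 0 := by
    rw [cayley_add_one hz]
    exact div_ne_zero (mul_ne_zero two_ne_zero Complex.I_ne_zero) hz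
  have hsub : cayley z - cayley w ≠ 0 :=
    left_ne_zero_of_mul (hprod ▸ mul_ne_zero hone (sub_ne_zero.2 hzw.symm))
  have hlog := congrArg (fun u : ℂ ↦ log ‖u‖) hprod
  simp only [norm_mul] at hlog
  rw [log_mul (norm_ne_zero_iff.2 hsub) (norm_ne_zero_iff.2 hw),
    log_mul (norm_ne_zero_iff.2 hone) (by simpa [sub_eq_zero] using hzw.symm)] at hlog
  rw [norm_sub_rev, add_comm w, sub_neg_eq_add]
  linarith

lemma integral_eq_smul_integral_comp_mul_add {E : Type*} [NormedAddCommGroup E] [NormedSpace ℝ E]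
    (g : ℝ → E) {r : ℝ} (hr : 0 < r) (m : ℝ) : ∫ x, g x = r • ∫ u, g (r * u + m) := by
  rw [Measure.integral_comp_mul_left (fun x ↦ g (x + m)), integral_add_right_eq_self,
    abs_of_pos (inv_pos.2 hr), smul_inv_smul₀ hr.ne']

lemma integral_log_mul_norm_sub_pow_div_one_add_sq {k : ℝ} (hk : k ≠ 0) (n : ℕ) {w : ℂ}
    (hw : 0 ≤ w.im) :
    ∫ x : ℝ, log (k * ‖x - w‖ ^ n) / (1 + x ^ 2) = π * log (k * ‖w + I‖ ^ n) := by
  have hwI : I + w ≠ 0 := I_add_ne_zero_of_im_nonneg hw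
  have hnorm : ‖w + I‖ ≠ 0 := norm_ne_zero_iff.2 (add_comm I w ▸ hwI)
  have hne : ∀ᵐ x : ℝ, (x : ℂ) ≠ w := by
    filter_upwards [Measure.ae_ne volume w.re] with x hx h
    exact hx (by simpa using congrArg Complex.re h)
  have hcircle : ∀ᵐ x : ℝ, log (k * ‖x - w‖ ^ n) / (1 + x ^ 2) =
      (1 + x ^ 2)⁻¹ • (log (k * ‖w + I‖ ^ n) +
        n * (log ‖cayley x - cayley w‖ - log ‖cayley x - -1‖)) := by
    filter_upwards [hne] with x hx
    rw [log_mul hk (pow_ne_zero _ (norm_ne_zero_iff.2 (sub_ne_zero.2 hx))), log_pow,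
      log_norm_sub_eq_cayley (I_add_ne_zero_of_im_nonneg (by simp)) hwI hx,
      log_mul hk (pow_ne_zero _ hnorm), log_pow, smul_eq_mul]
    ring
  have hmean := circleAverage_const_add_mul_log_norm_sub_sub (log (k * ‖w + I‖ ^ n)) n
    (norm_cayley_le_one hw) (γ := -1) (by simp)
  rw [circleAverage_eq_integral_cayley, smul_eq_mul, inv_mul_eq_iff_eq_mul₀ pi_ne_zero] at hmean
  rw [integral_congr_ae hcircle, hmean]

theorem integral_log_mul_norm_sub_pow_div_norm_sub_sq {k : ℝ} (hk : k ≠ 0) (n : ℕ) {w z : ℂ}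
    (hw : 0 ≤ w.im) (hz : 0 < z.im) :
    ∫ x : ℝ, log (k * ‖x - w‖ ^ n) / ‖x - z‖ ^ 2 =
      π / z.im * log (k * ‖w - conj z‖ ^ n) := by
  set v : ℂ := (w - z.re) / z.im with hv
  have hv_im : 0 ≤ v.im := by
    rw [hv, Complex.div_ofReal_im]
    simpa using div_nonneg hw hz.le
  have hz_ne : (z.im : ℂ) ≠ 0 := by exact_mod_cast hz.ne'
  have hscale (u : ℂ) : ‖z.im * u‖ = z.im * ‖u‖ := by
    rw [norm_mul, Complex.norm_of_nonneg hz.le]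
  have hnum (u : ℝ) : ‖((z.im * u + z.re : ℝ) : ℂ) - w‖ = z.im * ‖u - v‖ := by
    rw [← hscale, hv]
    congr 1
    push_cast
    field_simp
    ring
  have hden (u : ℝ) : ‖((z.im * u + z.re : ℝ) : ℂ) - z‖ ^ 2 = z.im ^ 2 * (1 + u ^ 2) := by
    rw [Complex.sq_norm, Complex.normSq_apply]
    simp only [Complex.sub_re, Complex.sub_im, Complex.ofReal_re, Complex.ofReal_im]
    ring
  have hval : z.im * ‖v + I‖ = ‖w - conj z‖ := by
    rw [← hscale, hv, mul_add, mul_div_cancel₀ _ hz_ne]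
    congr 1
    apply Complex.ext <;> simp
  rw [integral_eq_smul_integral_comp_mul_add _ hz z.re]
  simp_rw [hnum, hden, mul_pow, ← mul_assoc, div_mul_eq_div_div_swap]
  rw [integral_div, smul_eq_mul,
    integral_log_mul_norm_sub_pow_div_one_add_sq (mul_ne_zero hk (pow_ne_zero _ hz.ne')) n hv_im,
    mul_assoc k, ← mul_pow, hval]
  field_simp

end PoissonIntegral

section RealQuadratic

open scoped ComplexConjugate

/-- The root in the closed upper half-plane of a real quadratic `a X² + b X + c` with `0 < a` and
nonpositive discriminant. -/
noncomputable def upperRoot (a b c : ℝ) : ℂ := ⟨-b / (2 * a), √(4 * a * c - b ^ 2) / (2 * a)⟩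

lemma quadratic_eq_mul_norm_sub_upperRoot_sq {a b c : ℝ} (ha : a ≠ 0)
    (habc : 0 ≤ 4 * a * c - b ^ 2) (x : ℝ) :
    a * x ^ 2 + b * x + c = a * ‖x - upperRoot a b c‖ ^ 2 := by
  rw [Complex.sq_norm, Complex.normSq_apply]
  simp only [upperRoot, Complex.sub_re, Complex.sub_im, Complex.ofReal_re, Complex.ofReal_im]
  have hR := sq_sqrt habc
  set R := √(4 * a * c - b ^ 2)
  field_simp
  linear_combination -hR

lemma two_mul_mul_norm_upperRoot_sub_conj_sq {a b c d e f : ℝ} (ha : a ≠ 0) (hd : d ≠ 0)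
    (habc : 0 ≤ 4 * a * c - b ^ 2) (hdef : 0 ≤ 4 * d * f - e ^ 2) :
    2 * a * (d * ‖upperRoot d e f - conj (upperRoot a b c)‖ ^ 2) =
      2 * a * f - b * e + 2 * c * d + √(4 * a * c - b ^ 2) * √(4 * d * f - e ^ 2) := by
  rw [Complex.sq_norm, Complex.normSq_apply]
  simp only [upperRoot, Complex.sub_re, Complex.sub_im, Complex.conj_re, Complex.conj_im]
  have hR := sq_sqrt habc
  have hT := sq_sqrt hdef
  set R := √(4 * a * c - b ^ 2)
  set T := √(4 * d * f - e ^ 2)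
  field_simp
  linear_combination d ^ 2 * hR + a ^ 2 * hT

theorem stmt_1_general (a b c d e f : ℝ) (ha : 0 < a) (habc : 0 < 4 * a * c - b ^ 2)
    (hd : 0 < d) (hdef : 0 ≤ 4 * d * f - e ^ 2) :
    ∫ x : ℝ, Real.log (d * x ^ 2 + e * x + f) / (a * x ^ 2 + b * x + c) =
      (2 * π / Real.sqrt (4 * a * c - b ^ 2)) *
        (Real.log (2 * a * f - b * e + 2 * c * d +
            Real.sqrt (4 * a * c - b ^ 2) * Real.sqrt (4 * d * f - e ^ 2)) -
          Real.log (2 * a)) := by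
  have hz : 0 < (upperRoot a b c).im := div_pos (sqrt_pos.2 habc) (by positivity)
  have hw : 0 ≤ (upperRoot d e f).im := div_nonneg (sqrt_nonneg _) (by positivity)
  have hne : upperRoot d e f - conj (upperRoot a b c) ≠ 0 := by
    intro h
    have him := congrArg Complex.im h
    simp only [Complex.sub_im, Complex.conj_im, Complex.zero_im] at him
    linarith
  simp_rw [quadratic_eq_mul_norm_sub_upperRoot_sq ha.ne' habc.le,
    quadratic_eq_mul_norm_sub_upperRoot_sq hd.ne' hdef, div_mul_eq_div_div_swap]
  rw [integral_div, integral_log_mul_norm_sub_pow_div_norm_sub_sq hd.ne' 2 hw hz,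
    ← two_mul_mul_norm_upperRoot_sub_conj_sq ha.ne' hd.ne' habc.le hdef,
    log_mul (x := 2 * a) (by positivity) (by positivity), add_sub_cancel_left, upperRoot]
  field_simp

end RealQuadratic

theorem stmt_1 (a b c d e f : ℝ) (ha : 0 < a) (hc : 0 < c) (habc : 0 < 4 * a * c - b ^ 2)
    (hd : 0 < d) (hf : 0 < f) (hdef : 0 < 4 * d * f - e ^ 2) :
    ∫ x : ℝ, Real.log (d * x ^ 2 + e * x + f) / (a * x ^ 2 + b * x + c) =
      (2 * π / Real.sqrt (4 * a * c - b ^ 2)) *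
        (Real.log (2 * a * f - b * e + 2 * c * d +
            Real.sqrt (4 * a * c - b ^ 2) * Real.sqrt (4 * d * f - e ^ 2)) -
          Real.log (2 * a)) :=
  stmt_1_general a b c d e f ha habc hd hdef.le
end

section
/- The cross-entropy between two Cauchy densities, h^×(p_{l₁,s₁} : p_{l₂,s₂}) = −∫ p_{l₁,s₁}(x) ln p_{l₂,s₂}(x) dx, equals ln(π((s₁+s₂)² + (l₁−l₂)²)/s₂). -/
open MeasureTheory Real

noncomputable def cauchyPdf (l s x : ℝ) : ℝ := s / (π * (s ^ 2 + (x - l) ^ 2))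

/-!
Under the Cayley transform the Cauchy distribution with location `l` and scale `s` is the image of
the uniform distribution on the unit circle, the centre of the disc corresponding to `l + s * I`.
Since `log ‖z - ζ‖` is harmonic in the upper half-plane when `ζ` lies below it, its mean against
the Cauchy density is its value at `l + s * I`. The theorem is the case `ζ = l₂ - s₂ * I`, because
`log (cauchyPdf l₂ s₂ x) = log (s₂ / π) - 2 * log ‖x - ζ‖`.
-/

section CircleAverage

variable {E : Type*} [NormedAddCommGroup E]

lemma periodic_comp_circleMap {α : Type*} (f : ℂ → α) (c : ℂ) (R : ℝ) :
    Function.Periodic (fun θ : ℝ ↦ f (circleMap c R θ)) (2 * π) :=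
  (periodic_circleMap c R).comp f

lemma circleIntegrable_iff_integrableOn_Ioo_neg_pi_pi {f : ℂ → E} {c : ℂ} {R : ℝ} :
    CircleIntegrable f c R ↔ IntegrableOn (fun θ : ℝ ↦ f (circleMap c R θ)) (Set.Ioo (-π) π) := by
  have hshift := (periodic_comp_circleMap f c R).intervalIntegrable_iff (t₁ := 0) (t₂ := -π)
  rw [zero_add, show -π + 2 * π = π by ring] at hshift
  rw [CircleIntegrable, hshift,
    intervalIntegrable_iff_integrableOn_Ioo_of_le (neg_le_self pi_pos.le)]

lemma circleAverage_eq_integral_Ioo_neg_pi_pi [NormedSpace ℝ E] (f : ℂ → E) (c : ℂ) (R : ℝ) :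
    circleAverage f c R = (2 * π)⁻¹ • ∫ θ in Set.Ioo (-π) π, f (circleMap c R θ) := by
  have hshift := (periodic_comp_circleMap f c R).intervalIntegral_add_eq 0 (-π)
  rw [zero_add, show -π + 2 * π = π by ring] at hshift
  rw [circleAverage_def, hshift, intervalIntegral.integral_of_le (neg_le_self pi_pos.le),
    integral_Ioc_eq_integral_Ioo]

lemma mul_add_ne_zero_mem_codiscreteWithin {a b : ℂ} (h : a ≠ 0 ∨ b ≠ 0) (s : Set ℂ) :
    {w : ℂ | a * w + b ≠ 0} ∈ Filter.codiscreteWithin s := by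
  rcases eq_or_ne a 0 with rfl | ha
  · simp [h.resolve_left (· rfl)]
  · filter_upwards [compl_singleton_mem_codiscreteWithin (s := s) (-b / a)] with w hw hzero
    exact hw (by rw [Set.mem_singleton_iff, eq_div_iff ha]; linear_combination hzero)

theorem circleAverage_log_norm_mul_add (a b : ℂ) :
    circleAverage (fun w ↦ log ‖a * w + b‖) 0 1 = log (max ‖a‖ ‖b‖) := by
  rcases eq_or_ne a 0 with rfl | ha
  · simp [circleAverage_const]
  calc circleAverage (fun w ↦ log ‖a * w + b‖) 0 1
      = circleAverage (fun w ↦ log ‖a‖ + log ‖w + b / a‖) 0 1 := by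
        refine circleAverage_congr_codiscreteWithin ?_ one_ne_zero
        filter_upwards [mul_add_ne_zero_mem_codiscreteWithin (a := a) (b := b) (.inl ha) _]
          with w hw
        have hfactor : a * w + b = a * (w + b / a) := by field_simp
        rw [hfactor] at hw ⊢
        rw [norm_mul, log_mul (norm_ne_zero_iff.2 ha)
          (norm_ne_zero_iff.2 (right_ne_zero_of_mul hw))]
    _ = log ‖a‖ + log⁺ ‖b / a‖ := by
        rw [circleAverage_fun_add (circleIntegrable_const _ _ _)
          (MeromorphicOn.circleIntegrable_log_norm fun _ _ ↦ by fun_prop), circleAverage_const,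
          circleAverage_log_norm_add_const_eq_posLog]
    _ = log (max ‖a‖ ‖b‖) := by
        have ha' : 0 < ‖a‖ := norm_pos_iff.2 ha
        rw [posLog_eq_log_max_one (norm_nonneg _), ← log_mul ha'.ne' (by positivity),
          mul_max_of_nonneg _ _ ha'.le, mul_one, norm_div, mul_div_cancel₀ _ ha'.ne']

theorem circleAverage_log_norm_mul_add_div_mul_add {a b c d : ℂ} (hab : a ≠ 0 ∨ b ≠ 0)
    (hcd : c ≠ 0 ∨ d ≠ 0) :
    circleAverage (fun w ↦ log ‖(a * w + b) / (c * w + d)‖) 0 1 =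
      log (max ‖a‖ ‖b‖) - log (max ‖c‖ ‖d‖) := by
  rw [← circleAverage_log_norm_mul_add, ← circleAverage_log_norm_mul_add, ← circleAverage_fun_sub
    (MeromorphicOn.circleIntegrable_log_norm fun _ _ ↦ by fun_prop)
    (MeromorphicOn.circleIntegrable_log_norm fun _ _ ↦ by fun_prop)]
  refine circleAverage_congr_codiscreteWithin ?_ one_ne_zero
  filter_upwards [mul_add_ne_zero_mem_codiscreteWithin hab _,
    mul_add_ne_zero_mem_codiscreteWithin hcd _] with w hnum hden
  rw [norm_div, log_div (norm_ne_zero_iff.2 hnum) (norm_ne_zero_iff.2 hden)]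

end CircleAverage

section HalfPlane

open Complex (I)

/-- The inverse Cayley transform, mapping the unit disc onto the upper half-plane with `0 ↦ I` and
`1 ↦ 0`. The point `-1`, which corresponds to `∞`, is sent to `0` by division by zero. -/
noncomputable def discToHalfPlane (w : ℂ) : ℂ := I * (1 - w) / (1 + w)

lemma discToHalfPlane_circleMap (θ : ℝ) : discToHalfPlane (circleMap 0 1 θ) = tan (θ / 2) := by
  set u : ℂ := Complex.exp (θ / 2 * I) with hu
  have hu0 : u ≠ 0 := Complex.exp_ne_zero _
  have hw : circleMap 0 1 θ = u * u := by
    rw [circleMap, hu, ← Complex.exp_add]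
    simp only [zero_add, Complex.ofReal_one, one_mul]
    ring_nf
  have huinv : Complex.exp (-(θ / 2 : ℂ) * I) = u⁻¹ := by rw [neg_mul, Complex.exp_neg]
  rw [discToHalfPlane, hw, Complex.ofReal_tan, Complex.tan, Complex.sin, Complex.cos]
  push_cast
  rw [← hu, huinv]
  field_simp
  ring_nf

lemma add_mul_discToHalfPlane (p q : ℂ) {w : ℂ} (hw : 1 + w ≠ 0) :
    p + q * discToHalfPlane w = ((p - q * I) * w + (p + q * I)) / (w + 1) := by
  rw [discToHalfPlane, add_comm w 1]
  field_simp
  ring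

lemma norm_sub_mul_I_le_norm_add_mul_I {z : ℂ} {s : ℝ} (hs : 0 ≤ s) (hz : 0 ≤ z.im) :
    ‖z - s * I‖ ≤ ‖z + s * I‖ := by
  have hsub : ‖z - s * I‖ ^ 2 = z.re ^ 2 + (z.im - s) ^ 2 := by
    rw [Complex.sq_norm, Complex.normSq_apply]
    simp [sq]
  have hadd : ‖z + s * I‖ ^ 2 = z.re ^ 2 + (z.im + s) ^ 2 := by
    rw [Complex.sq_norm, Complex.normSq_apply]
    simp [sq]
  rw [← sq_le_sq₀ (norm_nonneg _) (norm_nonneg _), hsub, hadd]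
  nlinarith [mul_nonneg hs hz]

end HalfPlane

section CauchyDensity

open Complex (I)

variable {l s : ℝ}

lemma div_two_mem_Ioo_of_mem_Ioo {θ : ℝ} (hθ : θ ∈ Set.Ioo (-π) π) :
    θ / 2 ∈ Set.Ioo (-(π / 2)) (π / 2) :=
  ⟨by linarith [hθ.1], by linarith [hθ.2]⟩

lemma injOn_add_mul_tan_half (hs : s ≠ 0) :
    Set.InjOn (fun θ ↦ l + s * tan (θ / 2)) (Set.Ioo (-π) π) := by
  intro θ hθ η hη h
  have htan := mul_left_cancel₀ hs (add_left_cancel h)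
  have hhalf := injOn_tan (div_two_mem_Ioo_of_mem_Ioo hθ) (div_two_mem_Ioo_of_mem_Ioo hη) htan
  linarith

lemma image_add_mul_tan_half (hs : s ≠ 0) :
    (fun θ ↦ l + s * tan (θ / 2)) '' Set.Ioo (-π) π = Set.univ := by
  refine Set.eq_univ_of_forall fun x ↦ ⟨2 * arctan ((x - l) / s), ?_, ?_⟩
  · constructor <;>
      linarith [neg_pi_div_two_lt_arctan ((x - l) / s), arctan_lt_pi_div_two ((x - l) / s)]
  · simp only [mul_div_cancel_left₀ _ (two_ne_zero' ℝ), tan_arctan, mul_div_cancel₀ _ hs,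
      add_sub_cancel]

lemma hasDerivAt_add_mul_tan_half {θ : ℝ} (hθ : θ ∈ Set.Ioo (-π) π) :
    HasDerivAt (fun θ ↦ l + s * tan (θ / 2)) (s * (1 / cos (θ / 2) ^ 2 * (1 / 2))) θ :=
  have htan : HasDerivAt (fun θ ↦ tan (θ / 2)) (1 / cos (θ / 2) ^ 2 * (1 / 2)) θ :=
    HasDerivAt.comp (h₂ := tan) (h := (· / 2)) θ
      (hasDerivAt_tan_of_mem_Ioo (div_two_mem_Ioo_of_mem_Ioo hθ)) ((hasDerivAt_id θ).div_const 2)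
  (htan.const_mul s).const_add l

lemma abs_deriv_mul_cauchyPdf_add_mul_tan_half (hs : 0 < s) {θ : ℝ} (hθ : θ ∈ Set.Ioo (-π) π) :
    |s * (1 / cos (θ / 2) ^ 2 * (1 / 2))| * cauchyPdf l s (l + s * tan (θ / 2)) = (2 * π)⁻¹ := by
  have hcos : 0 < cos (θ / 2) := cos_pos_of_mem_Ioo (div_two_mem_Ioo_of_mem_Ioo hθ)
  have hden : s ^ 2 + (s * tan (θ / 2)) ^ 2 = s ^ 2 / cos (θ / 2) ^ 2 := by
    rw [mul_pow, tan_eq_sin_div_cos]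
    field_simp
    exact cos_sq_add_sin_sq _
  rw [abs_of_pos (by positivity), cauchyPdf, add_sub_cancel_left, hden]
  field_simp

variable {E : Type*} [NormedAddCommGroup E] [NormedSpace ℝ E]

lemma abs_deriv_smul_cauchyPdf_smul (hs : 0 < s) (f : ℂ → E) {θ : ℝ}
    (hθ : θ ∈ Set.Ioo (-π) π) :
    |s * (1 / cos (θ / 2) ^ 2 * (1 / 2))| • cauchyPdf l s (l + s * tan (θ / 2)) •
        f ↑(l + s * tan (θ / 2)) =
      (2 * π)⁻¹ • f (l + s * discToHalfPlane (circleMap 0 1 θ)) := by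
  rw [smul_smul, abs_deriv_mul_cauchyPdf_add_mul_tan_half hs hθ, discToHalfPlane_circleMap]
  push_cast
  rfl

theorem integrable_cauchyPdf_smul_iff_circleIntegrable (hs : 0 < s) {f : ℂ → E} :
    Integrable (fun x : ℝ ↦ cauchyPdf l s x • f x) ↔
      CircleIntegrable (fun w ↦ f (l + s * discToHalfPlane w)) 0 1 := by
  rw [← integrableOn_univ, ← image_add_mul_tan_half (l := l) hs.ne',
    integrableOn_image_iff_integrableOn_abs_deriv_smul measurableSet_Ioo
      (fun _ hθ ↦ (hasDerivAt_add_mul_tan_half hθ).hasDerivWithinAt)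
      (injOn_add_mul_tan_half hs.ne'),
    integrableOn_congr_fun (fun _ hθ ↦ abs_deriv_smul_cauchyPdf_smul hs f hθ) measurableSet_Ioo,
    circleIntegrable_iff_integrableOn_Ioo_neg_pi_pi]
  exact integrable_smul_iff (by positivity) _

theorem integral_cauchyPdf_smul_eq_circleAverage (hs : 0 < s) (f : ℂ → E) :
    ∫ x : ℝ, cauchyPdf l s x • f x =
      circleAverage (fun w ↦ f (l + s * discToHalfPlane w)) 0 1 := by
  rw [← setIntegral_univ, ← image_add_mul_tan_half (l := l) hs.ne',
    integral_image_eq_integral_abs_deriv_smul measurableSet_Ioo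
      (fun _ hθ ↦ (hasDerivAt_add_mul_tan_half hθ).hasDerivWithinAt)
      (injOn_add_mul_tan_half hs.ne'),
    setIntegral_congr_fun measurableSet_Ioo fun _ hθ ↦ abs_deriv_smul_cauchyPdf_smul hs f hθ,
    integral_smul, circleAverage_eq_integral_Ioo_neg_pi_pi]

lemma integrable_cauchyPdf (hs : 0 < s) : Integrable (cauchyPdf l s) := by
  simpa using (integrable_cauchyPdf_smul_iff_circleIntegrable (l := l) hs (f := fun _ ↦ 1)).2
    (circleIntegrable_const (1 : ℝ) 0 1)

lemma integral_cauchyPdf (hs : 0 < s) : ∫ x, cauchyPdf l s x = 1 := by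
  simpa [circleAverage_const] using
    integral_cauchyPdf_smul_eq_circleAverage (l := l) hs fun _ ↦ (1 : ℝ)

lemma integrable_cauchyPdf_mul_log_norm_sub (hs : 0 < s) (ζ : ℂ) :
    Integrable fun x : ℝ ↦ cauchyPdf l s x * log ‖x - ζ‖ := by
  refine (integrable_cauchyPdf_smul_iff_circleIntegrable hs (f := fun z ↦ log ‖z - ζ‖)).2
    (MeromorphicOn.circleIntegrable_log_norm fun _ _ ↦ ?_)
  unfold discToHalfPlane
  fun_prop

theorem integral_cauchyPdf_mul_log_norm_sub (hs : 0 < s) {ζ : ℂ} (hζ : ζ.im ≤ 0) :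
    ∫ x : ℝ, cauchyPdf l s x * log ‖x - ζ‖ = log ‖l + s * I - ζ‖ := by
  have hnorm : ‖l - ζ - s * I‖ ≤ ‖l - ζ + s * I‖ :=
    norm_sub_mul_I_le_norm_add_mul_I hs.le (by simpa using hζ)
  have hne : l - ζ + s * I ≠ 0 := fun h ↦ by
    have him : -ζ.im + s = 0 := by simpa using congrArg Complex.im h
    linarith
  calc ∫ x : ℝ, cauchyPdf l s x * log ‖x - ζ‖
      = circleAverage (fun w ↦ log ‖l + s * discToHalfPlane w - ζ‖) 0 1 :=
        integral_cauchyPdf_smul_eq_circleAverage hs fun z ↦ log ‖z - ζ‖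
    _ = circleAverage
          (fun w ↦ log ‖((l - ζ - s * I) * w + (l - ζ + s * I)) / (1 * w + 1)‖) 0 1 := by
        refine circleAverage_congr_codiscreteWithin ?_ one_ne_zero
        filter_upwards [mul_add_ne_zero_mem_codiscreteWithin (a := 1) (b := 1) (by simp) _]
          with w hw
        rw [one_mul] at hw ⊢
        rw [← add_mul_discToHalfPlane _ _ (by rwa [add_comm]), add_sub_right_comm]
    _ = log ‖l - ζ + s * I‖ := by
        rw [circleAverage_log_norm_mul_add_div_mul_add (.inr hne) (.inl one_ne_zero),
          max_eq_right hnorm, max_self, norm_one, log_one, sub_zero]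
    _ = log ‖l + s * I - ζ‖ := by rw [add_sub_right_comm]

lemma cauchyPdf_eq_div_norm_sq (l s x : ℝ) :
    cauchyPdf l s x = s / π / ‖(x : ℂ) - (l - s * I)‖ ^ 2 := by
  have hnorm : ‖(x : ℂ) - (l - s * I)‖ ^ 2 = (x - l) ^ 2 + s ^ 2 := by
    rw [← Complex.normSq_add_mul_I, ← Complex.sq_norm]
    push_cast
    ring_nf
  rw [cauchyPdf, hnorm, div_div, add_comm (s ^ 2)]

lemma log_cauchyPdf (hs : s ≠ 0) (x : ℝ) :
    log (cauchyPdf l s x) = log (s / π) - 2 * log ‖(x : ℂ) - (l - s * I)‖ := by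
  have hne : (x : ℂ) - (l - s * I) ≠ 0 := fun h ↦ hs (by simpa using congrArg Complex.im h)
  have hpow : ‖(x : ℂ) - (l - s * I)‖ ^ 2 ≠ 0 := pow_ne_zero 2 (norm_ne_zero_iff.2 hne)
  rw [cauchyPdf_eq_div_norm_sq, log_div (div_ne_zero hs pi_ne_zero) hpow, log_pow, Nat.cast_two]

theorem integral_cauchyPdf_mul_log_cauchyPdf (hs : 0 < s) (l' : ℝ) {s' : ℝ} (hs' : 0 < s') :
    ∫ x, cauchyPdf l s x * log (cauchyPdf l' s' x) =
      log (s' / π) - 2 * log ‖(l + s * I) - (l' - s' * I)‖ := by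
  have hexpand (x : ℝ) : cauchyPdf l s x * log (cauchyPdf l' s' x) =
      cauchyPdf l s x * log (s' / π) -
        2 * (cauchyPdf l s x * log ‖(x : ℂ) - (l' - s' * I)‖) := by
    rw [log_cauchyPdf hs'.ne']
    ring
  simp only [hexpand]
  rw [integral_sub ((integrable_cauchyPdf hs).mul_const _)
      ((integrable_cauchyPdf_mul_log_norm_sub hs _).const_mul 2),
    integral_mul_const, integral_const_mul, integral_cauchyPdf hs, one_mul,
    integral_cauchyPdf_mul_log_norm_sub hs (by simpa using hs'.le)]

end CauchyDensity

theorem stmt_3 (l₁ l₂ s₁ s₂ : ℝ) (hs₁ : 0 < s₁) (hs₂ : 0 < s₂) :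
    -∫ x : ℝ, cauchyPdf l₁ s₁ x * Real.log (cauchyPdf l₂ s₂ x) =
      Real.log (π * ((s₁ + s₂) ^ 2 + (l₁ - l₂) ^ 2) / s₂) := by
  have hnorm : ‖(l₁ + s₁ * Complex.I) - (l₂ - s₂ * Complex.I)‖ ^ 2 =
      (s₁ + s₂) ^ 2 + (l₁ - l₂) ^ 2 := by
    rw [add_comm ((s₁ + s₂) ^ 2), ← Complex.normSq_add_mul_I, ← Complex.sq_norm]
    push_cast
    ring_nf
  have hpos : 0 < (s₁ + s₂) ^ 2 + (l₁ - l₂) ^ 2 := by positivity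
  have hlog := congrArg log hnorm
  rw [log_pow, Nat.cast_two] at hlog
  rw [integral_cauchyPdf_mul_log_cauchyPdf hs₁ l₂ hs₂, hlog,
    log_div hs₂.ne' pi_ne_zero, log_div (by positivity) hs₂.ne', log_mul pi_ne_zero hpos.ne']
  ring
end

section
/- The Kullback–Leibler divergence between any two Cauchy densities is finite: for all l₁, l₂ ∈ ℝ and s₁, s₂ > 0, the function x ↦ p_{l₁,s₁}(x)·ln(p_{l₁,s₁}(x)/p_{l₂,s₂}(x)) is Lebesgue integrable on ℝ. -/
open MeasureTheory Real

/-!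
All quadratics `(x - l) ^ 2 + s ^ 2` with `s ≠ 0` are comparable uniformly on the real line, so the
ratio of two Cauchy densities is bounded above and away from zero. Its logarithm is therefore a
bounded function, and an integrable density times a bounded function is integrable.
-/

open Asymptotics Filter ProbabilityTheory
open scoped NNReal

theorem abs_log_le_max_abs_abs_inv (x : ℝ) : |log x| ≤ max |x| |x⁻¹| := by
  have log_le_abs (y : ℝ) : log y ≤ |y| := log_abs y ▸ log_le_self (abs_nonneg y)
  refine abs_le'.mpr ⟨le_max_of_le_left (log_le_abs x), le_max_of_le_right ?_⟩
  exact log_inv x ▸ log_le_abs x⁻¹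

theorem isBoundedUnder_abs_log_div_of_isTheta {α : Type*} {l : Filter α} {f g : α → ℝ}
    (hfg : f =Θ[l] g) : l.IsBoundedUnder (· ≤ ·) fun x => |log (f x / g x)| := by
  have hmax : l.IsBoundedUnder (· ≤ ·) fun x => max |f x / g x| |g x / f x| :=
    (div_isBoundedUnder_of_isBigO hfg.1).sup (div_isBoundedUnder_of_isBigO hfg.2)
  refine hmax.mono_le (.of_forall fun x => ?_)
  simpa only [inv_div] using abs_log_le_max_abs_abs_inv (f x / g x)

theorem integrable_mul_log_div_of_isTheta {α : Type*} [MeasurableSpace α] {μ : Measure α}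
    {f g : α → ℝ} (hf : Integrable f μ) (hg : AEMeasurable g μ) (hfg : f =Θ[ae μ] g) :
    Integrable (fun x => f x * log (f x / g x)) μ := by
  obtain ⟨C, hC⟩ := (isBoundedUnder_abs_log_div_of_isTheta hfg).eventually_le
  exact hf.mul_bdd (hf.aemeasurable.div hg).log.aestronglyMeasurable hC

theorem isBigO_top_sub_sq_add_sq (a b r : ℝ) {s : ℝ} (hs : s ≠ 0) :
    (fun x : ℝ => (x - a) ^ 2 + r ^ 2) =O[⊤] fun x => (x - b) ^ 2 + s ^ 2 := by
  have hconst (c : ℝ) : (fun _ : ℝ => c) =O[⊤] fun x : ℝ => (x - b) ^ 2 + s ^ 2 :=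
    (isBigO_const_const c (pow_ne_zero 2 hs) ⊤).trans <| isBigO_of_le ⊤ fun x => by
      simpa only [norm_of_nonneg, sq_nonneg, add_nonneg] using
        le_add_of_nonneg_left (sq_nonneg (x - b))
  have hsq : (fun x : ℝ => (x - b) ^ 2) =O[⊤] fun x => (x - b) ^ 2 + s ^ 2 :=
    isBigO_of_le ⊤ fun x => by
      simpa only [norm_of_nonneg, sq_nonneg, add_nonneg] using
        le_add_of_nonneg_right (sq_nonneg s)
  have hshift : (fun x : ℝ => (x - a) ^ 2) =O[⊤] fun x => (x - b) ^ 2 + (b - a) ^ 2 :=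
    isBigO_of_le' (c := 2) ⊤ fun x => by
      simpa only [norm_of_nonneg, sq_nonneg, add_nonneg, sub_add_sub_cancel] using
        add_sq_le (a := x - b) (b := b - a)
  exact (hshift.trans (hsq.add (hconst _))).add (hconst _)

theorem isTheta_top_cauchyPDFReal (l₁ l₂ : ℝ) {s₁ s₂ : ℝ≥0} (hs₁ : s₁ ≠ 0) (hs₂ : s₂ ≠ 0) :
    cauchyPDFReal l₁ s₁ =Θ[⊤] cauchyPDFReal l₂ s₂ := by
  have hs₁' : (s₁ : ℝ) ≠ 0 := NNReal.coe_ne_zero.mpr hs₁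
  have hs₂' : (s₂ : ℝ) ≠ 0 := NNReal.coe_ne_zero.mpr hs₂
  have hquad : (fun x : ℝ => (x - l₁) ^ 2 + (s₁ : ℝ) ^ 2) =Θ[⊤]
      fun x => (x - l₂) ^ 2 + (s₂ : ℝ) ^ 2 :=
    ⟨isBigO_top_sub_sq_add_sq l₁ l₂ s₁ hs₂', isBigO_top_sub_sq_add_sq l₂ l₁ s₂ hs₁'⟩
  exact (isTheta_const_const (mul_ne_zero (inv_ne_zero pi_ne_zero) hs₁')
    (mul_ne_zero (inv_ne_zero pi_ne_zero) hs₂')).mul hquad.inv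

theorem cauchyPdf_eq_cauchyPDFReal (l : ℝ) (s : ℝ≥0) : cauchyPdf l s = cauchyPDFReal l s := by
  ext x
  rw [cauchyPdf, cauchyPDFReal_def, div_eq_mul_inv, mul_inv]
  ring

theorem stmt_7 (l₁ l₂ s₁ s₂ : ℝ) (hs₁ : 0 < s₁) (hs₂ : 0 < s₂) :
    Integrable (fun x : ℝ =>
      cauchyPdf l₁ s₁ x * Real.log (cauchyPdf l₁ s₁ x / cauchyPdf l₂ s₂ x)) := by
  lift s₁ to ℝ≥0 using hs₁.le
  lift s₂ to ℝ≥0 using hs₂.le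
  simp only [cauchyPdf_eq_cauchyPDFReal]
  have hcomparable : cauchyPDFReal l₁ s₁ =Θ[⊤] cauchyPDFReal l₂ s₂ :=
    isTheta_top_cauchyPDFReal l₁ l₂ (NNReal.coe_pos.mp hs₁).ne' (NNReal.coe_pos.mp hs₂).ne'
  exact integrable_mul_log_div_of_isTheta (integrable_cauchyPDFReal l₁)
    (measurable_cauchyPDFReal l₂ s₂).aemeasurable (hcomparable.mono le_top)
end

section
/- For l ∈ ℝ, s > 0, l' ∈ ℝ, s' > 0, the integral ∫_{−∞}^{∞} (s/(π(s² + (x−l)²)))·ln(s'² + (x−l')²) dx equals ln((s + s')² + (l − l')²). -/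
open MeasureTheory Real

/-!
The Cayley transform `x ↦ (x - τ) / (x - conj τ)` with `τ = l + i s` carries the Cauchy distribution
to the uniform distribution on the unit circle. For `w` in the open lower half plane, `x - w` is the
quotient of `(τ - w) - (conj τ - w) z` by `1 - z`, where `z` is the Cayley transform of `x`. The
numerator has no zero in the closed unit disc, so by the mean value property the logarithm of its
norm averages to `log ‖τ - w‖`, while `log ‖1 - z‖` averages to `0`. Taking `w = l' - i s'` and
doubling gives the theorem.
-/

open ProbabilityTheory Set
open scoped ComplexConjugate NNReal

section CayleyTransform

variable {x₀ : ℝ} {γ : ℝ≥0} {E : Type*} [NormedAddCommGroup E] [NormedSpace ℝ E]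

/-- The restriction to the real line of the Cayley transform sending `τ` to `0`. It takes values
in the unit circle when `τ.im ≠ 0`. -/
noncomputable def cayleyTransform (τ : ℂ) (x : ℝ) : ℂ := (x - τ) / (x - conj τ)

/-- The argument in `(0, 2π)` of `cayleyTransform (x₀ + γ * I) x` for `γ ≠ 0`, which is `2π`
times the cumulative distribution function of the Cauchy distribution. -/
noncomputable def cayleyAngle (x₀ : ℝ) (γ : ℝ≥0) (x : ℝ) : ℝ := 2 * arctan ((x - x₀) / γ) + π

lemma integral_cauchyMeasure (hγ : γ ≠ 0) (f : ℝ → E) :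
    ∫ x, f x ∂cauchyMeasure x₀ γ = ∫ x, cauchyPDFReal x₀ γ x • f x := by
  have hpdf (x : ℝ) : (cauchyPDF x₀ γ x).toReal = cauchyPDFReal x₀ γ x :=
    ENNReal.toReal_ofReal (cauchyPDF_pos x₀ hγ x).le
  rw [cauchyMeasure_of_scale_ne_zero x₀ hγ, integral_withDensity_eq_integral_toReal_smul
    (measurable_cauchyPDF x₀ γ) (ae_of_all _ fun _ ↦ ENNReal.ofReal_lt_top)]
  simp only [hpdf]

lemma hasDerivAt_cayleyAngle (x₀ : ℝ) (γ : ℝ≥0) (x : ℝ) :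
    HasDerivAt (cayleyAngle x₀ γ) (2 * π * cauchyPDFReal x₀ γ x) x := by
  have h := ((((hasDerivAt_id x).sub_const x₀).div_const (γ : ℝ)).arctan.const_mul 2).add_const π
  convert! h using 1
  rw [cauchyPDFReal_def', NNReal.coe_inv, id]
  field

lemma injective_cayleyAngle (hγ : γ ≠ 0) : Function.Injective (cayleyAngle x₀ γ) := by
  intro x y hxy
  simpa [cayleyAngle, arctan_injective.eq_iff, hγ] using hxy

lemma range_cayleyAngle (hγ : γ ≠ 0) : range (cayleyAngle x₀ γ) = Ioo 0 (2 * π) := by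
  have hsurj : Function.Surjective fun x : ℝ ↦ (x - x₀) / γ := fun t ↦
    ⟨t * γ + x₀, by simp [hγ]⟩
  rw [show cayleyAngle x₀ γ = (2 * · + π) ∘ arctan ∘ fun x ↦ (x - x₀) / γ from rfl,
    range_comp, hsurj.range_comp, range_arctan, image_affine_Ioo two_pos]
  ring_nf

lemma exp_arctan_mul_I (t : ℝ) :
    Complex.exp (arctan t * Complex.I) = cos (arctan t) * (1 + t * Complex.I) := by
  have hsin : sin (arctan t) = t * cos (arctan t) := by
    rw [← tan_mul_cos (cos_arctan_pos t).ne', tan_arctan]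
  rw [Complex.exp_mul_I, ← Complex.ofReal_cos, ← Complex.ofReal_sin, hsin]
  push_cast
  ring

lemma exp_two_mul_arctan_mul_I (t : ℝ) :
    Complex.exp (2 * arctan t * Complex.I) = (1 + t * Complex.I) / (1 - t * Complex.I) := by
  have hcos : (cos (arctan t) : ℂ) ≠ 0 := by exact_mod_cast (cos_arctan_pos t).ne'
  have hneg : Complex.exp (-(arctan t * Complex.I)) = cos (arctan t) * (1 - t * Complex.I) := by
    simpa [sub_eq_add_neg] using exp_arctan_mul_I (-t)
  rw [mul_assoc, two_mul, ← sub_neg_eq_add, Complex.exp_sub, hneg, exp_arctan_mul_I,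
    mul_div_mul_left _ _ hcos]

lemma circleMap_cayleyAngle (hγ : γ ≠ 0) (x : ℝ) :
    circleMap 0 1 (cayleyAngle x₀ γ x) = cayleyTransform (x₀ + γ * Complex.I) x := by
  have hγ' : (γ : ℂ) ≠ 0 := by exact_mod_cast hγ
  set t : ℝ := (x - x₀) / γ with ht
  have hx : (x : ℂ) = x₀ + γ * t := by
    rw [ht]
    push_cast
    field
  have hnum : (x : ℂ) - (x₀ + γ * Complex.I) = -(γ * Complex.I) * (1 + t * Complex.I) := by
    linear_combination hx + γ * t * Complex.I_sq
  have hden : (x : ℂ) - conj (x₀ + γ * Complex.I) = γ * Complex.I * (1 - t * Complex.I) := by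
    simp only [map_add, map_mul, Complex.conj_ofReal, Complex.conj_I]
    linear_combination hx + γ * t * Complex.I_sq
  calc circleMap 0 1 (cayleyAngle x₀ γ x)
      = -Complex.exp (2 * arctan t * Complex.I) := by
        rw [circleMap_zero, cayleyAngle, ← ht]
        push_cast
        rw [add_mul, Complex.exp_add, Complex.exp_pi_mul_I]
        ring
    _ = cayleyTransform (x₀ + γ * Complex.I) x := by
        rw [exp_two_mul_arctan_mul_I, cayleyTransform, hnum, hden, neg_mul, neg_div,
          mul_div_mul_left _ _ (mul_ne_zero hγ' Complex.I_ne_zero)]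

theorem integral_comp_cayleyTransform_cauchyMeasure (hγ : γ ≠ 0) (f : ℂ → E) :
    ∫ x, f (cayleyTransform (x₀ + γ * Complex.I) x) ∂cauchyMeasure x₀ γ = circleAverage f 0 1 := by
  have habs (x : ℝ) (v : E) :
      |2 * π * cauchyPDFReal x₀ γ x| • v = (2 * π) • cauchyPDFReal x₀ γ x • v := by
    rw [abs_of_pos (mul_pos two_pi_pos (cauchyPDF_pos x₀ hγ x)), mul_smul]
  have hsubst := integral_image_eq_integral_abs_deriv_smul MeasurableSet.univ
    (fun x _ ↦ (hasDerivAt_cayleyAngle x₀ γ x).hasDerivWithinAt)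
    (injective_cayleyAngle hγ).injOn (fun θ ↦ f (circleMap 0 1 θ))
  simp only [image_univ, range_cayleyAngle hγ, setIntegral_univ, habs, integral_smul,
    circleMap_cayleyAngle hγ] at hsubst
  rw [integral_cauchyMeasure hγ, circleAverage_def,
    intervalIntegral.integral_of_le two_pi_pos.le, integral_Ioc_eq_integral_Ioo, hsubst,
    inv_smul_smul₀ two_pi_pos.ne']

end CayleyTransform

section LogPotential

variable {τ w : ℂ}

lemma norm_conj_sub_lt_norm_sub (hτ : 0 < τ.im) (hw : w.im < 0) :
    ‖conj τ - w‖ < ‖τ - w‖ := by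
  rw [← sq_lt_sq₀ (norm_nonneg _) (norm_nonneg _), Complex.sq_norm, Complex.sq_norm,
    Complex.normSq_apply, Complex.normSq_apply]
  simp only [Complex.sub_re, Complex.sub_im, Complex.conj_re, Complex.conj_im]
  nlinarith [mul_neg_of_pos_of_neg hτ hw]

lemma circleAverage_log_norm_sub_mul {a b : ℂ} (h : ‖b‖ < ‖a‖) :
    circleAverage (fun z ↦ log ‖a - b * z‖) 0 1 = log ‖a‖ := by
  have hne : ∀ z ∈ Metric.closedBall (0 : ℂ) |1|, a - b * z ≠ 0 := by
    intro z hz hzero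
    have hz' : ‖z‖ ≤ 1 := by simpa using hz
    have : ‖a‖ ≤ ‖b‖ := by
      rw [sub_eq_zero.mp hzero, norm_mul]
      exact mul_le_of_le_one_right (norm_nonneg b) hz'
    exact h.not_ge this
  have hanalytic : AnalyticOnNhd ℂ (fun z ↦ a - b * z) (Metric.closedBall 0 |1|) :=
    fun _ _ ↦ by fun_prop
  simpa using hanalytic.circleAverage_log_norm_of_ne_zero hne

lemma circleAverage_log_norm_one_sub : circleAverage (fun z ↦ log ‖1 - z‖) 0 1 = 0 := by
  simp only [norm_sub_rev (1 : ℂ)]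
  exact circleAverage_log_norm_sub_const₁ norm_one

lemma two_mul_log_norm (z : ℂ) : 2 * log ‖z‖ = log (z.re ^ 2 + z.im ^ 2) := by
  rw [pow_two, pow_two, ← Complex.normSq_apply, Complex.normSq_eq_norm_sq, log_pow,
    Nat.cast_ofNat]

lemma ofReal_sub_ne_zero (hw : w.im ≠ 0) (x : ℝ) : (x : ℂ) - w ≠ 0 := fun h ↦
  hw (by simpa using congrArg Complex.im h)

lemma log_norm_ofReal_sub_eq_cayleyTransform (hτ : τ.im ≠ 0) (hw : w.im ≠ 0) (x : ℝ) :
    log ‖x - w‖ = log ‖(τ - w) - (conj τ - w) * cayleyTransform τ x‖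
      - log ‖1 - cayleyTransform τ x‖ := by
  have hconj : (x : ℂ) - conj τ ≠ 0 := ofReal_sub_ne_zero (by simpa using hτ) x
  have hone : 1 - cayleyTransform τ x = (τ - conj τ) / (x - conj τ) := by
    rw [cayleyTransform]
    field
  have hsub : (τ - w) - (conj τ - w) * cayleyTransform τ x =
      (x - w) * (1 - cayleyTransform τ x) := by
    rw [hone, cayleyTransform]
    field_simp
    ring
  have hone_ne : 1 - cayleyTransform τ x ≠ 0 := by
    rw [hone, Complex.sub_conj]
    simp [hτ, hconj]
  rw [hsub, norm_mul, log_mul (norm_ne_zero_iff.mpr (ofReal_sub_ne_zero hw x))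
    (norm_ne_zero_iff.mpr hone_ne), add_sub_cancel_right]

theorem integral_log_norm_sub_cauchyMeasure (x₀ : ℝ) (γ : ℝ≥0) (hw : w.im < 0) :
    ∫ x : ℝ, log ‖x - w‖ ∂cauchyMeasure x₀ γ = log ‖x₀ + γ * Complex.I - w‖ := by
  rcases eq_or_ne γ 0 with rfl | hγ
  · simp
  set τ : ℂ := x₀ + γ * Complex.I with hτ_def
  have hτ : 0 < τ.im := by simpa [hτ_def, pos_iff_ne_zero] using hγ
  simp only [log_norm_ofReal_sub_eq_cayleyTransform hτ.ne' hw.ne]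
  rw [integral_comp_cayleyTransform_cauchyMeasure hγ
      fun z ↦ log ‖(τ - w) - (conj τ - w) * z‖ - log ‖1 - z‖,
    circleAverage_fun_sub (MeromorphicOn.circleIntegrable_log_norm fun _ _ ↦ by fun_prop)
      (MeromorphicOn.circleIntegrable_log_norm fun _ _ ↦ by fun_prop),
    circleAverage_log_norm_sub_mul (norm_conj_sub_lt_norm_sub hτ hw),
    circleAverage_log_norm_one_sub, sub_zero]

end LogPotential

theorem stmt_19 (l l' s s' : ℝ) (hs : 0 < s) (hs' : 0 < s') :
    ∫ x : ℝ, (s / (π * (s ^ 2 + (x - l) ^ 2))) * Real.log (s' ^ 2 + (x - l') ^ 2) =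
      Real.log ((s + s') ^ 2 + (l - l') ^ 2) := by
  lift s to ℝ≥0 using hs.le
  have hs₀ : s ≠ 0 := by simpa using hs.ne'
  let w : ℂ := l' - s' * Complex.I
  have hw : w.im < 0 := by simpa [w] using hs'
  have hlog (a b : ℝ) : log ((b + s') ^ 2 + (a - l') ^ 2) = 2 * log ‖a + b * Complex.I - w‖ := by
    simp [two_mul_log_norm, w, add_comm]
  have hintegrand (x : ℝ) : s / (π * (s ^ 2 + (x - l) ^ 2)) * log (s' ^ 2 + (x - l') ^ 2) =
      2 * (cauchyPDFReal l s x • log ‖x - w‖) := by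
    have hlog_zero := hlog x 0
    simp only [zero_add, Complex.ofReal_zero, zero_mul, add_zero] at hlog_zero
    rw [hlog_zero, cauchyPDFReal_def, smul_eq_mul]
    field
  simp only [hintegrand]
  rw [integral_const_mul, ← integral_cauchyMeasure hs₀, integral_log_norm_sub_cauchyMeasure l s hw,
    ← hlog l s]
end
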